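/- Let ℓ be a classical solution of the continuous swimmer problem with initial data ℓ₀ ∈ H²(0,Λ), and for each N let ℓ_h be the piecewise affine function built from a solution of the N-spring ODE system with initial values ℓ_j(0) = ℓ_{0,h}(y_j), ℓ_{0,h} ∈ V_h. Then there exists a constant C > 0, independent of h, such that for all t ≥ 0: ‖ℓ_h(·,t) − ℓ(·,t)‖ ≤ C‖ℓ_{0,h} − ℓ₀‖ + Ch²(‖∂_{yy}ℓ₀‖ + ‖∂_{yy}ℓ(·,t)‖) + Ch(∫₀^t ‖∂_{yt}ℓ(·,s)‖² ds)^{1/2}, where ‖·‖ denotes the L²(0,Λ) norm. (Theorem 1: first-order L² convergence of the discrete swimmer to the continuous one.) -/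

import Mathlib

open MeasureTheory Set

noncomputable section

/-- `v` belongs to the finite element space `V_h`: continuous on `[0,Λ]`,
affine on each subinterval `[y_j, y_{j+1}]` of the uniform partition with `N`
cells, and vanishing at `Λ`. -/
def IsVh (Λ : ℝ) (N : ℕ) (v : ℝ → ℝ) : Prop :=
  ContinuousOn v (Set.Icc 0 Λ) ∧
  (∀ j : ℕ, j < N →
    ∃ a b : ℝ, ∀ y ∈ Set.Icc ((j : ℝ) * (Λ / N)) (((j : ℝ) + 1) * (Λ / N)),
      v y = a * y + b) ∧
  v Λ = 0

/-!
The nodal error `e_j = ℓ_j - ℓ(y_j, ·)` solves the spring system with no load, driven by the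
consistency residual of `ℓ`. Testing with `e_j` and summing by parts makes the elastic energy appear
with a good sign; since `e` vanishes at the fixed end, `max |e_j| ≤ ∑ |e_{j+1} - e_j|`, so Young's
inequality absorbs the work of the residual and only its `ℓ¹` norm enters. By Taylor expansion
that norm is at most `(3/2) h ∫ |∂_{yt} ℓ|`: the interior residuals are third-order remainders, and
the boundary one involves `∂_t ℓ(0, ·)`, which is at most `∫ |∂_{yt} ℓ|` because `∂_t ℓ` vanishes at
`Λ`. Finally, on `V_h` minus a smooth function the nodal energy and the squared
`L²` norm are comparable up to `h⁴ ‖∂_{yy} ℓ‖²`, by the interpolation estimate on each cell.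
-/

section Calculus

variable {p q : ℝ}

lemma sq_integral_abs_le (hpq : p ≤ q) {f : ℝ → ℝ} (hf : ContinuousOn f (Icc p q)) :
    (∫ y in p..q, |f y|) ^ 2 ≤ (q - p) * ∫ y in p..q, f y ^ 2 := by
  rcases hpq.eq_or_lt with rfl | hlt
  · simp
  have hlen : 0 < q - p := sub_pos.2 hlt
  have hIoc : uIoc p q = Ioc p q := uIoc_of_le hpq
  have jensen : (⨍ y in p..q, |f y|) ^ 2 ≤ ⨍ y in p..q, |f y| ^ 2 :=
    even_two.convexOn_pow.map_set_average_le (continuous_pow 2).continuousOn isClosed_univ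
      (by simp [hIoc, hlt]) (by simp [hIoc]) (by simp)
      ((hf.abs.intervalIntegrable_of_Icc hpq).def')
      (((hf.abs.pow 2).intervalIntegrable_of_Icc hpq).def')
  simp only [interval_average_eq_div, sq_abs] at jensen
  rwa [div_pow, sq (q - p), ← div_div, div_le_div_iff_of_pos_right hlen, div_le_iff₀ hlen,
    mul_comm] at jensen

lemma abs_sub_le_integral_abs_deriv {f f' : ℝ → ℝ}
    (hf : ∀ y ∈ Icc p q, HasDerivWithinAt f (f' y) (Icc p q) y)
    (hf' : IntervalIntegrable f' volume p q) {x z : ℝ} (hx : x ∈ Icc p q) (hz : z ∈ Icc p q) :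
    |f z - f x| ≤ ∫ y in p..q, |f' y| := by
  wlog hxz : x ≤ z generalizing x z
  · rw [abs_sub_comm]
    exact this hz hx (le_of_not_ge hxz)
  have hsub : Icc x z ⊆ Icc p q := Icc_subset_Icc hx.1 hz.2
  have ftc : ∫ y in x..z, f' y = f z - f x :=
    intervalIntegral.integral_eq_sub_of_hasDerivAt_of_le hxz
      (fun y hy => (hf y (hsub hy)).continuousWithinAt.mono hsub)
      (fun y hy => ((hf y (hsub (Ioo_subset_Icc_self hy))).mono hsub).hasDerivAt
        (Icc_mem_nhds hy.1 hy.2))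
      (hf'.mono_set (by rwa [uIcc_of_le hxz, uIcc_of_le (hx.1.trans hx.2)]))
  calc |f z - f x| = |∫ y in x..z, f' y| := by rw [ftc]
    _ ≤ ∫ y in x..z, |f' y| := intervalIntegral.abs_integral_le_integral_abs hxz
    _ ≤ ∫ y in p..q, |f' y| := intervalIntegral.integral_mono_interval hx.1 hxz hz.2
        (Filter.Eventually.of_forall fun _ => abs_nonneg _) hf'.abs

section ThirdOrder

variable {u u₁ u₂ u₃ : ℝ → ℝ}
  (hu : ∀ y ∈ Icc p q, HasDerivWithinAt u (u₁ y) (Icc p q) y)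
  (hu₁ : ∀ y ∈ Icc p q, HasDerivWithinAt u₁ (u₂ y) (Icc p q) y)
  (hu₂ : ∀ y ∈ Icc p q, HasDerivWithinAt u₂ (u₃ y) (Icc p q) y)
  (hu₃ : ContinuousOn u₃ (Icc p q))
include hu hu₁ hu₂ hu₃

lemma abs_sub_taylor_two_le {x z : ℝ} (hx : x ∈ Icc p q) (hz : z ∈ Icc p q) :
    |u z - (u x + u₁ x * (z - x) + u₂ x * (z - x) ^ 2 / 2)| ≤
      (q - p) ^ 2 / 2 * ∫ y in p..q, |u₃ y| := by
  have hpq : p ≤ q := hx.1.trans hx.2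
  -- Vary the base point: the terms of the derivative telescope to the third-order one.
  have hT : ∀ s ∈ Icc p q, HasDerivWithinAt
      (fun s => u s + u₁ s * (z - s) + u₂ s * (z - s) ^ 2 / 2)
      (u₃ s * ((z - s) ^ 2 / 2)) (Icc p q) s := fun s hs => by
    have hzs := (hasDerivWithinAt_id s (Icc p q)).const_sub z
    refine (((hu s hs).add ((hu₁ s hs).mul hzs)).add
      (((hu₂ s hs).mul (hzs.pow 2)).div_const 2)).congr_deriv ?_
    simp only [id_eq, Pi.pow_apply]
    ring
  have hcont : ContinuousOn (fun s => u₃ s * ((z - s) ^ 2 / 2)) (Icc p q) := by fun_prop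
  have hbase := abs_sub_le_integral_abs_deriv hT (hcont.intervalIntegrable_of_Icc hpq) hx hz
  simp only [sub_self, mul_zero, ne_eq, OfNat.ofNat_ne_zero, not_false_eq_true, zero_pow, zero_div,
    add_zero] at hbase
  refine hbase.trans ?_
  rw [← intervalIntegral.integral_const_mul]
  refine intervalIntegral.integral_mono_on hpq (hcont.abs.intervalIntegrable_of_Icc hpq)
    ((hu₃.abs.intervalIntegrable_of_Icc hpq).const_mul _) fun s hs => ?_
  have hdist : (z - s) ^ 2 ≤ (q - p) ^ 2 :=
    sq_le_sq' (by linarith [hz.1, hs.2]) (by linarith [hz.2, hs.1])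
  rw [abs_mul, mul_comm, abs_of_nonneg (by positivity : 0 ≤ (z - s) ^ 2 / 2)]
  gcongr

lemma abs_slope_sub_deriv_left_le (hpq : p < q) :
    |(u q - u p) / (q - p) - (u₁ p + u₂ p * (q - p) / 2)| ≤
      (q - p) / 2 * ∫ y in p..q, |u₃ y| := by
  have hlen : 0 < q - p := sub_pos.2 hpq
  have taylor := abs_sub_taylor_two_le hu hu₁ hu₂ hu₃ (left_mem_Icc.2 hpq.le)
    (right_mem_Icc.2 hpq.le)
  have remainder : (u q - u p) / (q - p) - (u₁ p + u₂ p * (q - p) / 2) =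
      (u q - (u p + u₁ p * (q - p) + u₂ p * (q - p) ^ 2 / 2)) / (q - p) := by
    field_simp
    ring
  rw [remainder, abs_div, abs_of_pos hlen, div_le_iff₀ hlen]
  exact taylor.trans_eq (by ring)

lemma abs_slope_sub_deriv_right_le (hpq : p < q) :
    |(u q - u p) / (q - p) - (u₁ q - u₂ q * (q - p) / 2)| ≤
      (q - p) / 2 * ∫ y in p..q, |u₃ y| := by
  have hlen : 0 < q - p := sub_pos.2 hpq
  have taylor := abs_sub_taylor_two_le hu hu₁ hu₂ hu₃ (right_mem_Icc.2 hpq.le)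
    (left_mem_Icc.2 hpq.le)
  have remainder : (u q - u p) / (q - p) - (u₁ q - u₂ q * (q - p) / 2) =
      -(u p - (u q + u₁ q * (p - q) + u₂ q * (p - q) ^ 2 / 2)) / (q - p) := by
    field_simp
    ring
  rw [remainder, abs_div, abs_neg, abs_of_pos hlen, div_le_iff₀ hlen]
  exact taylor.trans_eq (by ring)

end ThirdOrder

lemma integral_sq_le_two_mul_add (hpq : p ≤ q) {f g : ℝ → ℝ} (hf : ContinuousOn f (Icc p q))
    (hg : ContinuousOn g (Icc p q)) :
    ∫ y in p..q, f y ^ 2 ≤ 2 * (∫ y in p..q, g y ^ 2) + 2 * ∫ y in p..q, (f y - g y) ^ 2 := by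
  have hg2 : IntervalIntegrable (fun y => 2 * g y ^ 2) volume p q :=
    ((hg.pow 2).intervalIntegrable_of_Icc hpq).const_mul 2
  have hfg2 : IntervalIntegrable (fun y => 2 * (f y - g y) ^ 2) volume p q :=
    (((hf.sub hg).pow 2).intervalIntegrable_of_Icc hpq).const_mul 2
  rw [← intervalIntegral.integral_const_mul, ← intervalIntegral.integral_const_mul,
    ← intervalIntegral.integral_add hg2 hfg2]
  refine intervalIntegral.integral_mono_on hpq ((hf.pow 2).intervalIntegrable_of_Icc hpq)
    (hg2.add hfg2) fun y _ => ?_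
  nlinarith [sq_nonneg (2 * g y - f y)]

/-- The affine function agreeing with `f` at `p` and at `q`: the piecewise affine interpolant of
`f`, seen on a single cell. -/
def chord (p q : ℝ) (f : ℝ → ℝ) (y : ℝ) : ℝ := f p + (f q - f p) / (q - p) * (y - p)

lemma continuous_chord (p q : ℝ) (f : ℝ → ℝ) : Continuous (chord p q f) := by
  unfold chord
  fun_prop

lemma integral_sq_chord (hpq : p < q) (f : ℝ → ℝ) :
    ∫ y in p..q, chord p q f y ^ 2 = (q - p) * (f p ^ 2 + f p * f q + f q ^ 2) / 3 := by
  have hlen : q - p ≠ 0 := (sub_pos.2 hpq).ne'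
  set m := (f q - f p) / (q - p) with hm
  have hprim : ∀ y ∈ uIcc p q, HasDerivAt
      (fun y => f p ^ 2 * (y - p) + f p * m * (y - p) ^ 2 + m ^ 2 / 3 * (y - p) ^ 3)
      (chord p q f y ^ 2) y := fun y _ => by
    have hy := (hasDerivAt_id y).sub_const p
    refine (((hy.const_mul (f p ^ 2)).add ((hy.pow 2).const_mul (f p * m))).add
      ((hy.pow 3).const_mul (m ^ 2 / 3))).congr_deriv ?_
    simp only [chord, ← hm, id_eq]
    push_cast
    ring
  rw [intervalIntegral.integral_eq_sub_of_hasDerivAt hprim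
    (((continuous_chord p q f).pow 2).intervalIntegrable _ _), hm]
  field_simp
  ring

section SecondOrder

variable {f f' f'' : ℝ → ℝ} (hpq : p < q)
  (hf : ∀ y ∈ Icc p q, HasDerivWithinAt f (f' y) (Icc p q) y)
  (hf' : ∀ y ∈ Icc p q, HasDerivWithinAt f' (f'' y) (Icc p q) y)
  (hf'' : ContinuousOn f'' (Icc p q))
include hpq hf hf' hf''

/-- By Rolle `f'` vanishes somewhere, so `|f'| ≤ ∫ |f''|`, and then `|f| ≤ (q - p) ∫ |f''|`. -/
lemma sq_le_integral_sq_of_endpoints_eq_zero (hp : f p = 0) (hq : f q = 0) {y : ℝ}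
    (hy : y ∈ Icc p q) : f y ^ 2 ≤ (q - p) ^ 3 * ∫ z in p..q, f'' z ^ 2 := by
  have hle := hpq.le
  have : 0 ≤ q - p := sub_nonneg.2 hle
  have hf'_cont : ContinuousOn f' (Icc p q) := fun z hz => (hf' z hz).continuousWithinAt
  obtain ⟨ξ, hξ, hξ0⟩ : ∃ ξ ∈ Ioo p q, f' ξ = 0 :=
    exists_hasDerivAt_eq_zero hpq (fun z hz => (hf z hz).continuousWithinAt) (hp.trans hq.symm)
      fun z hz => (hf z (Ioo_subset_Icc_self hz)).hasDerivAt (Icc_mem_nhds hz.1 hz.2)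
  set I := ∫ z in p..q, |f'' z|
  have hf'_le : ∀ z ∈ Icc p q, |f' z| ≤ I := fun z hz => by
    simpa only [hξ0, sub_zero] using abs_sub_le_integral_abs_deriv hf'
      (hf''.intervalIntegrable_of_Icc hle) (Ioo_subset_Icc_self hξ) hz
  have hf_le : |f y| ≤ (q - p) * I := by
    calc |f y| ≤ ∫ z in p..q, |f' z| := by
          simpa only [hp, sub_zero] using abs_sub_le_integral_abs_deriv hf
            (hf'_cont.intervalIntegrable_of_Icc hle) (left_mem_Icc.2 hle) hy
      _ ≤ ∫ _ in p..q, I := intervalIntegral.integral_mono_on hle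
          (hf'_cont.abs.intervalIntegrable_of_Icc hle) intervalIntegrable_const hf'_le
      _ = (q - p) * I := by rw [intervalIntegral.integral_const, smul_eq_mul]
  calc f y ^ 2 ≤ ((q - p) * I) ^ 2 := sq_le_sq.2 (hf_le.trans (le_abs_self _))
    _ = (q - p) ^ 2 * I ^ 2 := mul_pow _ _ 2
    _ ≤ (q - p) ^ 2 * ((q - p) * ∫ z in p..q, f'' z ^ 2) := by
        gcongr
        exact sq_integral_abs_le hle hf''
    _ = (q - p) ^ 3 * ∫ z in p..q, f'' z ^ 2 := by ring

lemma integral_sq_sub_chord_le :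
    ∫ y in p..q, (f y - chord p q f y) ^ 2 ≤ (q - p) ^ 4 * ∫ y in p..q, f'' y ^ 2 := by
  have hlen : q - p ≠ 0 := (sub_pos.2 hpq).ne'
  set r : ℝ → ℝ := fun y => f y - chord p q f y
  have hr : ∀ y ∈ Icc p q,
      HasDerivWithinAt r (f' y - (f q - f p) / (q - p)) (Icc p q) y := fun y hy =>
    ((hf y hy).sub ((((hasDerivWithinAt_id y _).sub_const p).const_mul _).const_add _)).congr_deriv
      (by rw [mul_one])
  have hrp : r p = 0 := by simp only [r, chord, sub_self, mul_zero, add_zero]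
  have hrq : r q = 0 := by simp only [r, chord, div_mul_cancel₀ _ hlen, add_sub_cancel, sub_self]
  have hr_cont : ContinuousOn r (Icc p q) := fun y hy => (hr y hy).continuousWithinAt
  calc ∫ y in p..q, r y ^ 2 ≤ ∫ _ in p..q, (q - p) ^ 3 * ∫ z in p..q, f'' z ^ 2 :=
        intervalIntegral.integral_mono_on hpq.le ((hr_cont.pow 2).intervalIntegrable_of_Icc hpq.le)
          intervalIntegrable_const fun _ hy => sq_le_integral_sq_of_endpoints_eq_zero hpq hr
            (fun z hz => (hf' z hz).sub_const _) hf'' hrp hrq hy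
    _ = (q - p) ^ 4 * ∫ y in p..q, f'' y ^ 2 := by
        rw [intervalIntegral.integral_const, smul_eq_mul]
        ring

lemma integral_sq_le_endpoints_add :
    ∫ y in p..q, f y ^ 2 ≤
      (q - p) * (f p ^ 2 + f q ^ 2) + 2 * (q - p) ^ 4 * ∫ y in p..q, f'' y ^ 2 := by
  have split := integral_sq_le_two_mul_add hpq.le
    (fun y hy => (hf y hy).continuousWithinAt) (continuous_chord p q f).continuousOn
  rw [integral_sq_chord hpq] at split
  have interp := integral_sq_sub_chord_le hpq hf hf' hf''
  nlinarith [mul_nonneg (sub_pos.2 hpq).le (sq_nonneg (f p - f q))]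

lemma endpoints_le_integral_sq_add :
    (q - p) * (f p ^ 2 + f q ^ 2) ≤
      12 * (∫ y in p..q, f y ^ 2) + 12 * (q - p) ^ 4 * ∫ y in p..q, f'' y ^ 2 := by
  have split := integral_sq_le_two_mul_add hpq.le
    (continuous_chord p q f).continuousOn fun y hy => (hf y hy).continuousWithinAt
  simp only [integral_sq_chord hpq, sub_sq_comm (chord p q f _)] at split
  have interp := integral_sq_sub_chord_le hpq hf hf' hf''
  nlinarith [mul_nonneg (sub_pos.2 hpq).le (sq_nonneg (f p + f q))]

end SecondOrder

end Calculus

lemma sqrt_add_le_sqrt_add_sqrt {a b : ℝ} (ha : 0 ≤ a) (hb : 0 ≤ b) : √(a + b) ≤ √a + √b := by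
  refine Real.sqrt_le_iff.2 ⟨by positivity, ?_⟩
  rw [add_sq, Real.sq_sqrt ha, Real.sq_sqrt hb]
  linarith [mul_nonneg (Real.sqrt_nonneg a) (Real.sqrt_nonneg b)]

lemma sqrt_le_of_le_weighted_sum {V A B D F a b d r C h : ℝ} (hA : 0 ≤ A) (hB : 0 ≤ B)
    (hD : 0 ≤ D) (hF : 0 ≤ F) (hC : 0 ≤ C) (hh : 0 ≤ h) (ha : a ≤ C ^ 2) (hb : b ≤ C ^ 2)
    (hd : d ≤ C ^ 2) (hr : r ≤ C ^ 2)
    (hV : V ≤ a * A + b * h ^ 4 * B + d * h ^ 4 * D + r * h ^ 2 * F) :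
    √V ≤ C * √A + C * h ^ 2 * (√B + √D) + C * h * √F := by
  have sqrt_sq_mul {k : ℝ} (hk : 0 ≤ k) (y : ℝ) : √(k ^ 2 * y) = k * √y := by
    rw [Real.sqrt_mul (sq_nonneg k), Real.sqrt_sq hk]
  have hV' : V ≤ C ^ 2 * A + (C * h ^ 2) ^ 2 * (B + D) + (C * h) ^ 2 * F := by
    calc V ≤ C ^ 2 * A + C ^ 2 * h ^ 4 * B + C ^ 2 * h ^ 4 * D + C ^ 2 * h ^ 2 * F :=
          hV.trans (by gcongr)
      _ = _ := by ring
  calc √V ≤ √(C ^ 2 * A + (C * h ^ 2) ^ 2 * (B + D) + (C * h) ^ 2 * F) :=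
        Real.sqrt_le_sqrt hV'
    _ ≤ √(C ^ 2 * A) + √((C * h ^ 2) ^ 2 * (B + D)) + √((C * h) ^ 2 * F) :=
        (sqrt_add_le_sqrt_add_sqrt (by positivity) (by positivity)).trans
          (by gcongr; exact sqrt_add_le_sqrt_add_sqrt (by positivity) (by positivity))
    _ = C * √A + C * h ^ 2 * √(B + D) + C * h * √F := by
        rw [sqrt_sq_mul hC, sqrt_sq_mul (by positivity), sqrt_sq_mul (by positivity)]
    _ ≤ C * √A + C * h ^ 2 * (√B + √D) + C * h * √F := by
        gcongr
        exact sqrt_add_le_sqrt_add_sqrt hB hD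

section SpringChain

/-- Net force on mass `j` of a chain of springs of stiffness `c / h`. Masses are numbered from `0`,
so that mass `j` sits at `j * h` (the node `y_{j+1}` of the `N`-spring system); mass `0` feels the
friction `α` and the load `F`. -/
def springForce (c α h F : ℝ) (x : ℕ → ℝ) : ℕ → ℝ
  | 0 => c * (x 1 - x 0) / h - α * x 0 - F
  | j + 1 => c * (x j - 2 * x (j + 1) + x (j + 2)) / h

/-- The squared `L²` norm of nodal values on a mesh of width `h`, with the mass of each cell lumped
at its left end. -/
def nodalEnergy (h : ℝ) (N : ℕ) (x : ℕ → ℝ) : ℝ := ∑ j ∈ Finset.range N, h * x j ^ 2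

variable {N : ℕ} {c α h : ℝ}

lemma springForce_sub (F G : ℝ) (x z : ℕ → ℝ) (j : ℕ) :
    springForce c α h F x j - springForce c α h G z j =
      springForce c α h (F - G) (fun i => x i - z i) j := by
  cases j <;> simp only [springForce] <;> ring

lemma nodalEnergy_congr {x z : ℕ → ℝ} (hxz : ∀ j < N, x j = z j) :
    nodalEnergy h N x = nodalEnergy h N z :=
  Finset.sum_congr rfl fun j hj => by rw [hxz j (Finset.mem_range.1 hj)]

lemma hasDerivAt_nodalEnergy {x : ℕ → ℝ → ℝ} {v : ℕ → ℝ} {t : ℝ} (hh : h ≠ 0)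
    (hx : ∀ j < N, HasDerivAt (x j) (v j / h) t) :
    HasDerivAt (fun s => nodalEnergy h N fun j => x j s)
      (2 * ∑ j ∈ Finset.range N, v j * x j t) t := by
  rw [Finset.mul_sum]
  refine HasDerivAt.fun_sum fun j hj => ?_
  refine (((hx j (Finset.mem_range.1 hj)).fun_pow 2).const_mul h).congr_deriv ?_
  field_simp
  push_cast
  ring

lemma sum_springForce_mul_self (c α h : ℝ) {x : ℕ → ℝ} (hx : x N = 0) :
    ∑ j ∈ Finset.range N, springForce c α h 0 x j * x j =
      -(c / h) * ∑ j ∈ Finset.range N, (x (j + 1) - x j) ^ 2 - α * x 0 ^ 2 := by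
  have partial_sum (n : ℕ) : ∑ j ∈ Finset.range (n + 1), springForce c α h 0 x j * x j =
      -(c / h) * ∑ j ∈ Finset.range (n + 1), (x (j + 1) - x j) ^ 2 - α * x 0 ^ 2
        + c / h * (x (n + 1) - x n) * x (n + 1) := by
    induction n with
    | zero =>
      simp only [Finset.sum_range_one, zero_add, springForce]
      ring
    | succ n ih =>
      rw [Finset.sum_range_succ, ih, Finset.sum_range_succ _ (n + 1)]
      simp only [springForce]
      ring
  cases N with
  | zero => simp only [Finset.range_zero, Finset.sum_empty, hx]; ring
  | succ n => rw [partial_sum, hx, mul_zero, add_zero]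

lemma abs_le_sum_abs_sub {x : ℕ → ℝ} (hx : x N = 0) {j : ℕ} (hj : j ≤ N) :
    |x j| ≤ ∑ i ∈ Finset.range N, |x (i + 1) - x i| := by
  calc |x j| = |∑ i ∈ Finset.Ico j N, (x (i + 1) - x i)| := by
        rw [Finset.sum_Ico_sub x hj, hx, zero_sub, abs_neg]
    _ ≤ ∑ i ∈ Finset.Ico j N, |x (i + 1) - x i| := Finset.abs_sum_le_sum_abs _ _
    _ ≤ ∑ i ∈ Finset.range N, |x (i + 1) - x i| :=
        Finset.sum_le_sum_of_subset_of_nonneg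
          (fun _ hi => Finset.mem_range.2 (Finset.mem_Ico.1 hi).2) fun _ _ _ => abs_nonneg _

/-- The elastic dissipation absorbs the work of the residual `R`. -/
lemma sum_springForce_sub_mul_le (hh : 0 < h) (hc : 0 < c) (hα : 0 ≤ α) {x R : ℕ → ℝ} {ρ : ℝ}
    (hx : x N = 0) (hR : ∑ j ∈ Finset.range N, |R j| ≤ ρ) :
    ∑ j ∈ Finset.range N, (springForce c α h 0 x j - R j) * x j ≤ ρ ^ 2 * (N * h) / (4 * c) := by
  set X := ∑ j ∈ Finset.range N, |x (j + 1) - x j|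
  set D := ∑ j ∈ Finset.range N, (x (j + 1) - x j) ^ 2
  have hX : X ^ 2 ≤ N * D := by
    simpa only [Finset.card_range, sq_abs] using
      sq_sum_le_card_mul_sum_sq (s := Finset.range N) (f := fun j => |x (j + 1) - x j|)
  have work : -∑ j ∈ Finset.range N, R j * x j ≤ ρ * X := by
    calc -∑ j ∈ Finset.range N, R j * x j ≤ |∑ j ∈ Finset.range N, R j * x j| := neg_le_abs _
      _ ≤ ∑ j ∈ Finset.range N, |R j * x j| := Finset.abs_sum_le_sum_abs _ _
      _ ≤ ∑ j ∈ Finset.range N, |R j| * X := Finset.sum_le_sum fun j hj => by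
          rw [abs_mul]
          gcongr
          exact abs_le_sum_abs_sub hx (Finset.mem_range.1 hj).le
      _ = (∑ j ∈ Finset.range N, |R j|) * X := by rw [Finset.sum_mul]
      _ ≤ ρ * X := by gcongr
  have young : ρ * X ≤ c / h * D + ρ ^ 2 * (N * h) / (4 * c) := by
    have : 0 ≤ D := Finset.sum_nonneg fun _ _ => sq_nonneg _
    refine le_of_abs_le (abs_le_of_sq_le_sq ?_ (by positivity))
    calc (ρ * X) ^ 2 = ρ ^ 2 * X ^ 2 := mul_pow _ _ 2
      _ ≤ ρ ^ 2 * (N * D) := by gcongr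
      _ = 4 * (c / h * D) * (ρ ^ 2 * (N * h) / (4 * c)) := by field_simp
      _ ≤ (c / h * D + ρ ^ 2 * (N * h) / (4 * c)) ^ 2 := four_mul_le_sq_add _ _
  simp only [sub_mul, Finset.sum_sub_distrib, sum_springForce_mul_self c α h hx]
  linarith [mul_nonneg hα (sq_nonneg (x 0))]

end SpringChain

section Mesh

variable {N : ℕ} {h : ℝ}

lemma Icc_cell_subset (hh : 0 ≤ h) {j : ℕ} (hj : j < N) :
    Icc (j * h) ((j + 1 : ℕ) * h) ⊆ Icc 0 (N * h) :=
  Icc_subset_Icc (by positivity) (by gcongr; exact hj)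

lemma mul_cell_lt (hh : 0 < h) (j : ℕ) : (j : ℝ) * h < (j + 1 : ℕ) * h := by
  gcongr
  exact j.lt_succ_self

lemma cell_length (h : ℝ) (j : ℕ) : ((j + 1 : ℕ) : ℝ) * h - j * h = h := by
  push_cast
  ring

lemma sum_integral_cells (hh : 0 ≤ h) {f : ℝ → ℝ} (hf : ContinuousOn f (Icc 0 (N * h))) :
    ∑ j ∈ Finset.range N, ∫ y in (j * h)..((j + 1 : ℕ) * h), f y = ∫ y in 0..(N * h), f y := by
  have cells := intervalIntegral.sum_integral_adjacent_intervals (μ := volume) (f := f) (n := N)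
    (a := fun j : ℕ => j * h) fun j hj =>
      (hf.mono (Icc_cell_subset hh hj)).intervalIntegrable_of_Icc (by gcongr; exact j.le_succ)
  simpa only [Nat.cast_zero, zero_mul] using cells

/-- Defect of the nodal values of a smooth profile `u`, with derivatives `u₁` and `u₂`, in the force
balance of the springs: the mass `h` moves at the speed `c * u₂` of the heat flow, and the load is
the one for which `u` satisfies the Robin condition at `0`. -/
def springResidual (c α h : ℝ) (u u₁ u₂ : ℝ → ℝ) (j : ℕ) : ℝ :=
  h * (c * u₂ (j * h)) - springForce c α h (c * u₁ 0 - α * u 0) (fun i => u (i * h)) j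

lemma hasDerivWithinAt_cell (hh : 0 ≤ h) {f f' : ℝ → ℝ}
    (hf : ∀ y ∈ Icc 0 (N * h), HasDerivWithinAt f (f' y) (Icc 0 (N * h)) y) {j : ℕ} (hj : j < N) :
    ∀ y ∈ Icc (j * h) ((j + 1 : ℕ) * h),
      HasDerivWithinAt f (f' y) (Icc (j * h) ((j + 1 : ℕ) * h)) y := fun y hy =>
  (hf y (Icc_cell_subset hh hj hy)).mono (Icc_cell_subset hh hj)

section Consistency

variable {c : ℝ} {u u₁ u₂ u₃ : ℝ → ℝ} (hh : 0 < h) (hc : 0 ≤ c) (α : ℝ)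
  (hu : ∀ y ∈ Icc 0 (N * h), HasDerivWithinAt u (u₁ y) (Icc 0 (N * h)) y)
  (hu₁ : ∀ y ∈ Icc 0 (N * h), HasDerivWithinAt u₁ (u₂ y) (Icc 0 (N * h)) y)
  (hu₂ : ∀ y ∈ Icc 0 (N * h), HasDerivWithinAt u₂ (u₃ y) (Icc 0 (N * h)) y)
  (hu₃ : ContinuousOn u₃ (Icc 0 (N * h)))
include hh hc hu hu₁ hu₂ hu₃

lemma abs_springResidual_zero_le (hN : 0 < N) :
    |springResidual c α h u u₁ u₂ 0| ≤
      c * (h / 2) * (|u₂ 0| + ∫ y in ((0 : ℕ) * h)..((0 + 1 : ℕ) * h), |u₃ y|) := by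
  have left := abs_slope_sub_deriv_left_le (hasDerivWithinAt_cell hh.le hu hN)
    (hasDerivWithinAt_cell hh.le hu₁ hN) (hasDerivWithinAt_cell hh.le hu₂ hN)
    (hu₃.mono (Icc_cell_subset hh.le hN)) (mul_cell_lt hh 0)
  rw [cell_length] at left
  have defect : springResidual c α h u u₁ u₂ 0 = c * (u₂ 0 * (h / 2) -
      ((u ((0 + 1 : ℕ) * h) - u ((0 : ℕ) * h)) / h -
        (u₁ ((0 : ℕ) * h) + u₂ ((0 : ℕ) * h) * h / 2))) := by
    simp only [springResidual, springForce, Nat.cast_zero, zero_mul, zero_add]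
    ring
  rw [defect, abs_mul, abs_of_nonneg hc, mul_assoc]
  gcongr
  refine (abs_sub _ _).trans ?_
  rw [abs_mul, abs_of_pos (half_pos hh), mul_add, mul_comm |u₂ 0|]
  gcongr

lemma abs_springResidual_succ_le {j : ℕ} (hj : j + 1 < N) :
    |springResidual c α h u u₁ u₂ (j + 1)| ≤
      c * (h / 2) * ((∫ y in (j * h)..((j + 1 : ℕ) * h), |u₃ y|) +
        ∫ y in ((j + 1 : ℕ) * h)..((j + 1 + 1 : ℕ) * h), |u₃ y|) := by
  have hj' : j < N := by omega
  have right := abs_slope_sub_deriv_right_le (hasDerivWithinAt_cell hh.le hu hj')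
    (hasDerivWithinAt_cell hh.le hu₁ hj') (hasDerivWithinAt_cell hh.le hu₂ hj')
    (hu₃.mono (Icc_cell_subset hh.le hj')) (mul_cell_lt hh j)
  have left := abs_slope_sub_deriv_left_le (hasDerivWithinAt_cell hh.le hu hj)
    (hasDerivWithinAt_cell hh.le hu₁ hj) (hasDerivWithinAt_cell hh.le hu₂ hj)
    (hu₃.mono (Icc_cell_subset hh.le hj)) (mul_cell_lt hh (j + 1))
  rw [cell_length] at left right
  have defect : springResidual c α h u u₁ u₂ (j + 1) = c * (
      ((u ((j + 1 : ℕ) * h) - u (j * h)) / h -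
        (u₁ ((j + 1 : ℕ) * h) - u₂ ((j + 1 : ℕ) * h) * h / 2)) -
      ((u ((j + 1 + 1 : ℕ) * h) - u ((j + 1 : ℕ) * h)) / h -
        (u₁ ((j + 1 : ℕ) * h) + u₂ ((j + 1 : ℕ) * h) * h / 2))) := by
    simp only [springResidual, springForce]
    ring
  rw [defect, abs_mul, abs_of_nonneg hc, mul_assoc, mul_add]
  gcongr
  exact (abs_sub _ _).trans (add_le_add right left)

lemma sum_abs_springResidual_le (hend : u₂ (N * h) = 0) :
    ∑ j ∈ Finset.range N, |springResidual c α h u u₁ u₂ j| ≤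
      3 / 2 * h * (c * ∫ y in 0..(N * h), |u₃ y|) := by
  set M : ℕ → ℝ := fun j => ∫ y in (j * h)..((j + 1 : ℕ) * h), |u₃ y|
  set Q : ℝ := ∫ y in 0..(N * h), |u₃ y|
  have hL : (0 : ℝ) ≤ N * h := by positivity
  have hM : ∑ j ∈ Finset.range N, M j = Q := sum_integral_cells hh.le hu₃.abs
  have hM_nonneg (j : ℕ) : 0 ≤ M j :=
    intervalIntegral.integral_nonneg (mul_cell_lt hh j).le fun _ _ => abs_nonneg _
  have hQ : 0 ≤ Q := intervalIntegral.integral_nonneg hL fun _ _ => abs_nonneg _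
  have hu₂_zero : |u₂ 0| ≤ Q := by
    simpa only [hend, sub_zero] using abs_sub_le_integral_abs_deriv hu₂
      (hu₃.intervalIntegrable_of_Icc hL) (right_mem_Icc.2 hL) (left_mem_Icc.2 hL)
  rcases N with _ | n
  · simp only [Finset.range_zero, Finset.sum_empty]
    positivity
  have interior : ∑ j ∈ Finset.range n, M j ≤ Q := by
    linarith [hM_nonneg n, Finset.sum_range_succ M n]
  calc ∑ j ∈ Finset.range (n + 1), |springResidual c α h u u₁ u₂ j|
      ≤ ∑ j ∈ Finset.range n, c * (h / 2) * (M j + M (j + 1)) + c * (h / 2) * (|u₂ 0| + M 0) := by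
        rw [Finset.sum_range_succ']
        exact add_le_add
          (Finset.sum_le_sum fun j hj =>
            abs_springResidual_succ_le hh hc α hu hu₁ hu₂ hu₃ (by simpa using hj))
          (abs_springResidual_zero_le hh hc α hu hu₁ hu₂ hu₃ n.succ_pos)
    _ = c * (h / 2) * (∑ j ∈ Finset.range n, M j + |u₂ 0| + Q) := by
        rw [← hM, Finset.sum_range_succ', ← Finset.mul_sum, Finset.sum_add_distrib]
        ring
    _ ≤ c * (h / 2) * (Q + Q + Q) := by gcongr
    _ = 3 / 2 * h * (c * Q) := by ring

end Consistency

end Mesh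

section Interpolation

variable {Λ : ℝ} {N : ℕ} {v f f' f'' : ℝ → ℝ}

lemma natCast_mul_div_self (hN : 0 < N) (Λ : ℝ) : (N : ℝ) * (Λ / N) = Λ :=
  mul_div_cancel₀ Λ (Nat.cast_ne_zero.2 hN.ne')

lemma nodalEnergy_comp_succ {h : ℝ} {x : ℕ → ℝ} (hx : x N = 0) :
    nodalEnergy h N (fun j => x (j + 1)) = nodalEnergy h N x - h * x 0 ^ 2 := by
  have shift := Finset.sum_range_succ' (fun j => h * x j ^ 2) N
  rw [Finset.sum_range_succ, hx] at shift
  simp only [nodalEnergy]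
  linarith

lemma IsVh.exists_hasDerivWithinAt_cell (hv : IsVh Λ N v) {j : ℕ} (hj : j < N) :
    ∃ a, ∀ y ∈ Icc (j * (Λ / N)) ((j + 1 : ℕ) * (Λ / N)),
      HasDerivWithinAt v a (Icc (j * (Λ / N)) ((j + 1 : ℕ) * (Λ / N))) y := by
  obtain ⟨a, b, hab⟩ := hv.2.1 j hj
  rw [← Nat.cast_succ] at hab
  refine ⟨a, fun y hy => ?_⟩
  have haff : HasDerivAt (fun y => a * y + b) a y :=
    (((hasDerivAt_id y).const_mul a).add_const b).congr_deriv (mul_one a)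
  exact haff.hasDerivWithinAt.congr hab (hab y hy)

variable (hΛ : 0 < Λ) (hv : IsVh Λ N v)
  (hf : ∀ y ∈ Icc 0 Λ, HasDerivWithinAt f (f' y) (Icc 0 Λ) y)
  (hf' : ∀ y ∈ Icc 0 Λ, HasDerivWithinAt f' (f'' y) (Icc 0 Λ) y)
include hΛ hv hf hf'

lemma IsVh.exists_hasDerivWithinAt_sub_cell {j : ℕ} (hj : j < N) :
    ∃ e' : ℝ → ℝ, ∀ y ∈ Icc (j * (Λ / N)) ((j + 1 : ℕ) * (Λ / N)),
      HasDerivWithinAt (fun y => v y - f y) (e' y)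
        (Icc (j * (Λ / N)) ((j + 1 : ℕ) * (Λ / N))) y ∧
      HasDerivWithinAt e' (-f'' y) (Icc (j * (Λ / N)) ((j + 1 : ℕ) * (Λ / N))) y := by
  have hh : 0 ≤ Λ / N := by positivity
  have hN : 0 < N := j.zero_le.trans_lt hj
  rw [← natCast_mul_div_self hN Λ] at hf hf'
  obtain ⟨a, ha⟩ := hv.exists_hasDerivWithinAt_cell hj
  exact ⟨fun y => a - f' y, fun y hy => ⟨(ha y hy).sub (hasDerivWithinAt_cell hh hf hj y hy),
    (hasDerivWithinAt_cell hh hf' hj y hy).const_sub a⟩⟩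

variable (hf'' : ContinuousOn f'' (Icc 0 Λ)) (hN : 0 < N)
include hf'' hN

lemma IsVh.integral_sq_sub_le (hfΛ : f Λ = 0) :
    ∫ y in 0..Λ, (v y - f y) ^ 2 ≤
      2 * nodalEnergy (Λ / N) N (fun j => v (j * (Λ / N)) - f (j * (Λ / N))) +
        2 * (Λ / N) ^ 4 * ∫ y in 0..Λ, f'' y ^ 2 := by
  have hh : 0 < Λ / N := by positivity
  have hL := natCast_mul_div_self hN Λ
  set h := Λ / N
  set e : ℕ → ℝ := fun j => v (j * h) - f (j * h)
  have heN : e N = 0 := by simp only [e, hL, hv.2.2, hfΛ, sub_zero]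
  have cell : ∀ j ∈ Finset.range N, ∫ y in (j * h)..((j + 1 : ℕ) * h), (v y - f y) ^ 2 ≤
      h * (e j ^ 2 + e (j + 1) ^ 2) +
        2 * h ^ 4 * ∫ y in (j * h)..((j + 1 : ℕ) * h), f'' y ^ 2 := fun j hj => by
    have hj := Finset.mem_range.1 hj
    obtain ⟨e', he⟩ := hv.exists_hasDerivWithinAt_sub_cell hΛ hf hf' hj
    have hf''_cell := hf''.mono (hL ▸ Icc_cell_subset hh.le hj)
    simpa only [cell_length, neg_sq] using integral_sq_le_endpoints_add (mul_cell_lt hh j)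
      (fun y hy => (he y hy).1) (fun y hy => (he y hy).2) hf''_cell.neg
  have hvf : ContinuousOn (fun y => (v y - f y) ^ 2) (Icc 0 (N * h)) :=
    hL.symm ▸ (hv.1.sub fun y hy => (hf y hy).continuousWithinAt).pow 2
  have hf''_sq : ContinuousOn (fun y => f'' y ^ 2) (Icc 0 (N * h)) := hL.symm ▸ hf''.pow 2
  have total := Finset.sum_le_sum cell
  simp only [mul_add, Finset.sum_add_distrib, ← Finset.mul_sum, sum_integral_cells hh.le hvf,
    sum_integral_cells hh.le hf''_sq, hL] at total
  have shift := nodalEnergy_comp_succ (h := h) heN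
  simp only [nodalEnergy, ← Finset.mul_sum] at shift ⊢
  linarith [mul_nonneg hh.le (sq_nonneg (e 0))]

lemma IsVh.nodalEnergy_sub_le :
    nodalEnergy (Λ / N) N (fun j => v (j * (Λ / N)) - f (j * (Λ / N))) ≤
      12 * (∫ y in 0..Λ, (v y - f y) ^ 2) + 12 * (Λ / N) ^ 4 * ∫ y in 0..Λ, f'' y ^ 2 := by
  have hh : 0 < Λ / N := by positivity
  have hL := natCast_mul_div_self hN Λ
  set h := Λ / N
  set e : ℕ → ℝ := fun j => v (j * h) - f (j * h)
  have cell : ∀ j ∈ Finset.range N, h * e j ^ 2 ≤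
      12 * (∫ y in (j * h)..((j + 1 : ℕ) * h), (v y - f y) ^ 2) +
        12 * h ^ 4 * ∫ y in (j * h)..((j + 1 : ℕ) * h), f'' y ^ 2 := fun j hj => by
    have hj := Finset.mem_range.1 hj
    obtain ⟨e', he⟩ := hv.exists_hasDerivWithinAt_sub_cell hΛ hf hf' hj
    have hf''_cell := hf''.mono (hL ▸ Icc_cell_subset hh.le hj)
    have nodes := endpoints_le_integral_sq_add (mul_cell_lt hh j)
      (fun y hy => (he y hy).1) (fun y hy => (he y hy).2) hf''_cell.neg
    simp only [cell_length, neg_sq] at nodes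
    exact le_trans (by gcongr; exact le_add_of_nonneg_right (sq_nonneg _)) nodes
  have hvf : ContinuousOn (fun y => (v y - f y) ^ 2) (Icc 0 (N * h)) :=
    hL.symm ▸ (hv.1.sub fun y hy => (hf y hy).continuousWithinAt).pow 2
  have hf''_sq : ContinuousOn (fun y => f'' y ^ 2) (Icc 0 (N * h)) := hL.symm ▸ hf''.pow 2
  have total := Finset.sum_le_sum cell
  simp only [Finset.sum_add_distrib, ← Finset.mul_sum, sum_integral_cells hh.le hvf,
    sum_integral_cells hh.le hf''_sq, hL] at total
  rwa [nodalEnergy, ← Finset.mul_sum]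

end Interpolation

section PartialDerivatives

variable {𝕜 E : Type*} [NontriviallyNormedField 𝕜] [NormedAddCommGroup E] [NormedSpace 𝕜 E]
  {f : 𝕜 → 𝕜 → E}

lemma contDiff_partialDeriv_fst {m n : WithTop ℕ∞} (hf : ContDiff 𝕜 n fun p : 𝕜 × 𝕜 => f p.1 p.2)
    (hmn : m + 1 ≤ n) : ContDiff 𝕜 m fun p : 𝕜 × 𝕜 => deriv (fun y => f y p.2) p.1 := by
  simp only [← fderiv_apply_one_eq_deriv]
  exact ContDiff.fderiv_apply (f := fun (p : 𝕜 × 𝕜) y => f y p.2)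
    (hf.comp (contDiff_snd.prodMk (contDiff_snd.comp contDiff_fst))) contDiff_fst contDiff_const hmn

lemma contDiff_partialDeriv_snd {m n : WithTop ℕ∞} (hf : ContDiff 𝕜 n fun p : 𝕜 × 𝕜 => f p.1 p.2)
    (hmn : m + 1 ≤ n) : ContDiff 𝕜 m fun p : 𝕜 × 𝕜 => deriv (f p.1) p.2 := by
  simp only [← fderiv_apply_one_eq_deriv]
  exact ContDiff.fderiv_apply (f := fun (p : 𝕜 × 𝕜) s => f p.1 s)
    (hf.comp ((contDiff_fst.comp contDiff_fst).prodMk contDiff_snd)) contDiff_snd contDiff_const hmn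

lemma hasDerivAt_partialDeriv_fst (hf : ContDiff 𝕜 1 fun p : 𝕜 × 𝕜 => f p.1 p.2) (y s : 𝕜) :
    HasDerivAt (fun y => f y s) (deriv (fun y => f y s) y) y :=
  ((hf.comp (contDiff_id.prodMk contDiff_const)).differentiable one_ne_zero y).hasDerivAt

lemma hasDerivAt_partialDeriv_snd (hf : ContDiff 𝕜 1 fun p : 𝕜 × 𝕜 => f p.1 p.2) (y s : 𝕜) :
    HasDerivAt (f y) (deriv (f y) s) s :=
  ((hf.comp (contDiff_const.prodMk contDiff_id)).differentiable one_ne_zero s).hasDerivAt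

end PartialDerivatives

section Evolution

/-- Classical solution on `[0, Λ]` of the heat equation with conductivity `c`, the Robin condition
`c ∂_y ℓ - α ℓ = F` at `0` and the Dirichlet condition at `Λ`. The swimmer problem is the case
`c = Λ²K`, `α = ΛKã/(2a₁)`, `F = (Λ/2) L̇₀`. -/
structure IsHeatRobinSolution (Λ c α : ℝ) (F : ℝ → ℝ) (ℓ : ℝ → ℝ → ℝ) : Prop where
  contDiff : ContDiff ℝ 2 fun p : ℝ × ℝ => ℓ p.1 p.2
  heat : ∀ y ∈ Ioo 0 Λ, ∀ t > 0,
    deriv (fun s => ℓ y s) t = c * deriv (fun x => deriv (fun x' => ℓ x' t) x) y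
  robin : ∀ t > 0, c * deriv (fun y => ℓ y t) 0 - α * ℓ 0 t = F t
  dirichlet : ∀ t > 0, ℓ Λ t = 0

/-- Solution on `[0, ∞)` of the equations of motion of the chain of `N` springs on the mesh of
width `Λ / N`, whose end `x N` is held fixed. Masses are numbered from `0` as in `springForce`. -/
structure IsSpringSolution (Λ c α : ℝ) (F : ℝ → ℝ) (N : ℕ) (x : ℕ → ℝ → ℝ) : Prop where
  continuousOn : ∀ j < N, ContinuousOn (x j) (Ici 0)
  hasDerivAt : ∀ j < N, ∀ t > 0,
    HasDerivAt (x j) (springForce c α (Λ / N) (F t) (fun i => x i t) j / (Λ / N)) t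
  fixed_end : ∀ t ≥ 0, x N t = 0

variable {Λ c α : ℝ} {F : ℝ → ℝ} {ℓ : ℝ → ℝ → ℝ} {N : ℕ}

/-- The `springResidual` of the profile `ℓ (·, t)` of a heat flow, with `∂_{yy} ℓ` written as
`c⁻¹ ∂_t ℓ`: this spares a third derivative in `y`. -/
def heatResidual (c α h : ℝ) (ℓ : ℝ → ℝ → ℝ) (t : ℝ) : ℕ → ℝ :=
  springResidual c α h (fun y => ℓ y t) (fun y => deriv (fun x => ℓ x t) y)
    fun y => c⁻¹ * deriv (ℓ y) t

lemma IsSpringSolution.of_deriv {z : ℕ → ℝ → ℝ} (hN : 0 < N) (hΛ : 0 < Λ)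
    (hz : ∀ j, 1 ≤ j → j ≤ N → Differentiable ℝ (z j))
    (inner_mass : ∀ j, 2 ≤ j → j ≤ N → ∀ t,
      deriv (z j) t = c * (z (j - 1) t - 2 * z j t + z (j + 1) t) / (Λ / N) ^ 2)
    (first_mass : ∀ t,
      Λ / N * deriv (z 1) t = c * (z 2 t - z 1 t) / (Λ / N) - α * z 1 t - F t)
    (fixed_end : ∀ t, z (N + 1) t = 0) :
    IsSpringSolution Λ c α F N fun j => z (j + 1) where
  continuousOn j hj := (hz (j + 1) j.succ_pos hj).continuous.continuousOn
  hasDerivAt j hj t _ := by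
    have hh : Λ / N ≠ 0 := by positivity
    refine (hz (j + 1) j.succ_pos hj t).hasDerivAt.congr_deriv ?_
    rw [eq_div_iff hh, mul_comm]
    cases j with
    | zero => exact first_mass t
    | succ j =>
      rw [inner_mass (j + 1 + 1) (by omega) hj t]
      simp only [springForce, Nat.add_sub_cancel]
      field_simp
  fixed_end t _ := fixed_end t

namespace IsHeatRobinSolution

variable (hℓ : IsHeatRobinSolution Λ c α F ℓ)
include hℓ

lemma contDiff_deriv_space : ContDiff ℝ 1 fun p : ℝ × ℝ => deriv (fun y => ℓ y p.2) p.1 :=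
  contDiff_partialDeriv_fst hℓ.contDiff one_add_one_eq_two.le

lemma contDiff_deriv_time : ContDiff ℝ 1 fun p : ℝ × ℝ => deriv (ℓ p.1) p.2 :=
  contDiff_partialDeriv_snd hℓ.contDiff one_add_one_eq_two.le

lemma hasDerivAt_space (y t : ℝ) : HasDerivAt (fun y => ℓ y t) (deriv (fun x => ℓ x t) y) y :=
  hasDerivAt_partialDeriv_fst (hℓ.contDiff.of_le one_le_two) y t

lemma hasDerivAt_deriv_space (y t : ℝ) :
    HasDerivAt (fun y => deriv (fun x => ℓ x t) y)
      (deriv (fun x => deriv (fun x' => ℓ x' t) x) y) y :=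
  hasDerivAt_partialDeriv_fst (f := fun y s => deriv (fun x => ℓ x s) y) hℓ.contDiff_deriv_space y t

lemma hasDerivAt_deriv_time (y t : ℝ) :
    HasDerivAt (fun y => deriv (ℓ y) t) (deriv (fun x => deriv (fun τ => ℓ x τ) t) y) y :=
  hasDerivAt_partialDeriv_fst hℓ.contDiff_deriv_time y t

lemma continuous_deriv_space_space (t : ℝ) :
    Continuous fun y => deriv (fun x => deriv (fun x' => ℓ x' t) x) y :=
  (contDiff_partialDeriv_fst (f := fun y s => deriv (fun x => ℓ x s) y) hℓ.contDiff_deriv_space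
    (zero_add 1).le).continuous.comp (by fun_prop : Continuous fun y : ℝ => (y, t))

lemma continuous_deriv_space_time :
    Continuous fun p : ℝ × ℝ => deriv (fun x => deriv (fun τ => ℓ x τ) p.2) p.1 :=
  (contDiff_partialDeriv_fst hℓ.contDiff_deriv_time (zero_add 1).le).continuous

lemma heat_Icc (hΛ : 0 < Λ) {y t : ℝ} (hy : y ∈ Icc 0 Λ) (ht : 0 < t) :
    deriv (fun s => ℓ y s) t = c * deriv (fun x => deriv (fun x' => ℓ x' t) x) y := by
  have hcont : Continuous fun y => deriv (ℓ y) t :=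
    hℓ.contDiff_deriv_time.continuous.comp (by fun_prop : Continuous fun y : ℝ => (y, t))
  have closed := Set.EqOn.closure (fun y hy => hℓ.heat y hy t ht) hcont
    ((hℓ.continuous_deriv_space_space t).const_mul c)
  rw [closure_Ioo hΛ.ne] at closed
  exact closed hy

lemma dirichlet_Ici {t : ℝ} (ht : 0 ≤ t) : ℓ Λ t = 0 := by
  have hcont : Continuous (ℓ Λ) :=
    hℓ.contDiff.continuous.comp (by fun_prop : Continuous fun s : ℝ => (Λ, s))
  have closed := Set.EqOn.closure (s := Ioi 0) hℓ.dirichlet hcont continuous_const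
  rw [closure_Ioi] at closed
  exact closed ht

lemma deriv_time_end {t : ℝ} (ht : 0 < t) : deriv (ℓ Λ) t = 0 := by
  have hzero : ℓ Λ =ᶠ[nhds t] fun _ => 0 := by
    filter_upwards [Ioi_mem_nhds ht] with s hs using hℓ.dirichlet s hs
  rw [hzero.deriv_eq, deriv_const]

lemma sum_abs_heatResidual_le (hΛ : 0 < Λ) (hc : 0 < c) (hN : 0 < N) {t : ℝ} (ht : 0 < t) :
    ∑ j ∈ Finset.range N, |heatResidual c α (Λ / N) ℓ t j| ≤
      3 / 2 * (Λ / N) * ∫ y in 0..Λ, |deriv (fun x => deriv (fun τ => ℓ x τ) t) y| := by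
  have hL := natCast_mul_div_self hN Λ
  have consistency := sum_abs_springResidual_le (N := N) (h := Λ / N) (by positivity) hc.le α
    (u₃ := fun y => c⁻¹ * deriv (fun x => deriv (fun τ => ℓ x τ) t) y)
    (fun y _ => (hℓ.hasDerivAt_space y t).hasDerivWithinAt)
    (fun y hy => by
      rw [hL] at hy
      refine (hℓ.hasDerivAt_deriv_space y t).hasDerivWithinAt.congr_deriv ?_
      rw [hℓ.heat_Icc hΛ hy ht, inv_mul_cancel_left₀ hc.ne'])
    (fun y _ => ((hℓ.hasDerivAt_deriv_time y t).const_mul c⁻¹).hasDerivWithinAt)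
    ((hℓ.continuous_deriv_space_time.comp
      (by fun_prop : Continuous fun y : ℝ => (y, t))).const_mul c⁻¹).continuousOn
    (by rw [hL, hℓ.deriv_time_end ht, mul_zero])
  simpa only [heatResidual, hL, abs_mul, abs_of_pos (inv_pos.2 hc),
    intervalIntegral.integral_const_mul, mul_inv_cancel_left₀ hc.ne'] using consistency

variable {x : ℕ → ℝ → ℝ} (hx : IsSpringSolution Λ c α F N x)
include hx

lemma hasDerivAt_nodal_error (hΛ : 0 < Λ) (hc : c ≠ 0) {t : ℝ} (ht : 0 < t) {j : ℕ} (hj : j < N) :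
    HasDerivAt (fun s => x j s - ℓ (j * (Λ / N)) s)
      ((springForce c α (Λ / N) 0 (fun i => x i t - ℓ (i * (Λ / N)) t) j -
        heatResidual c α (Λ / N) ℓ t j) / (Λ / N)) t := by
  have hN : 0 < N := j.zero_le.trans_lt hj
  have : Λ / N ≠ 0 := by positivity
  refine ((hx.hasDerivAt j hj t ht).sub
    (hasDerivAt_partialDeriv_snd (hℓ.contDiff.of_le one_le_two) _ t)).congr_deriv ?_
  rw [← sub_self (F t), ← springForce_sub, heatResidual, springResidual, hℓ.robin t ht,
    mul_inv_cancel_left₀ hc]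
  field_simp
  ring

lemma sum_springForce_sub_heatResidual_mul_le (hΛ : 0 < Λ) (hc : 0 < c) (hα : 0 ≤ α) (hN : 0 < N)
    {t : ℝ} (ht : 0 < t) :
    ∑ j ∈ Finset.range N,
        (springForce c α (Λ / N) 0 (fun i => x i t - ℓ (i * (Λ / N)) t) j -
          heatResidual c α (Λ / N) ℓ t j) * (x j t - ℓ (j * (Λ / N)) t) ≤
      9 / 16 * (Λ ^ 2 / c) * (Λ / N) ^ 2 *
        ∫ y in 0..Λ, deriv (fun x => deriv (fun τ => ℓ x τ) t) y ^ 2 := by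
  have hh : 0 < Λ / N := by positivity
  have hL := natCast_mul_div_self hN Λ
  set h := Λ / N
  set m : ℝ → ℝ := fun y => deriv (fun x => deriv (fun τ => ℓ x τ) t) y
  have hm : Continuous m :=
    hℓ.continuous_deriv_space_time.comp (by fun_prop : Continuous fun y : ℝ => (y, t))
  have error_end : x N t - ℓ (N * h) t = 0 := by
    rw [hL, hx.fixed_end t ht.le, hℓ.dirichlet t ht, sub_zero]
  have work := sum_springForce_sub_mul_le hh hc hα (x := fun j => x j t - ℓ (j * h) t) error_end
    (hℓ.sum_abs_heatResidual_le hΛ hc hN ht)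
  calc _ ≤ (3 / 2 * h * ∫ y in 0..Λ, |m y|) ^ 2 * (N * h) / (4 * c) := work
    _ = 9 / 16 * (Λ / c) * h ^ 2 * (∫ y in 0..Λ, |m y|) ^ 2 := by rw [hL]; ring
    _ ≤ 9 / 16 * (Λ / c) * h ^ 2 * ((Λ - 0) * ∫ y in 0..Λ, m y ^ 2) := by
        gcongr
        exact sq_integral_abs_le hΛ.le hm.continuousOn
    _ = 9 / 16 * (Λ ^ 2 / c) * h ^ 2 * ∫ y in 0..Λ, m y ^ 2 := by ring

lemma nodalEnergy_le_add_integral (hΛ : 0 < Λ) (hc : 0 < c) (hα : 0 ≤ α) (hN : 0 < N) {t : ℝ}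
    (ht : 0 ≤ t) :
    nodalEnergy (Λ / N) N (fun j => x j t - ℓ (j * (Λ / N)) t) ≤
      nodalEnergy (Λ / N) N (fun j => x j 0 - ℓ (j * (Λ / N)) 0) +
        9 / 8 * (Λ ^ 2 / c) * (Λ / N) ^ 2 *
          ∫ s in 0..t, ∫ y in 0..Λ, deriv (fun x => deriv (fun τ => ℓ x τ) s) y ^ 2 := by
  have hh : Λ / N ≠ 0 := by positivity
  have energy_cont : ContinuousOn
      (fun s => nodalEnergy (Λ / N) N fun j => x j s - ℓ (j * (Λ / N)) s) (Icc 0 t) := by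
    refine continuousOn_finsetSum _ fun j hj => (ContinuousOn.pow ?_ 2).const_mul _
    have hx_cont : ContinuousOn (x j) (Icc 0 t) :=
      (hx.continuousOn j (Finset.mem_range.1 hj)).mono Icc_subset_Ici_self
    exact hx_cont.sub (hℓ.contDiff.continuous.comp
      (by fun_prop : Continuous fun s : ℝ => (j * (Λ / N), s))).continuousOn
  have energy_deriv (s : ℝ) (hs : s ∈ Ioo 0 t) := (hasDerivAt_nodalEnergy hh fun j hj =>
    hℓ.hasDerivAt_nodal_error hx hΛ hc.ne' hs.1 hj).hasDerivWithinAt (s := Ioi s)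
  have growth_cont : Continuous fun s => 9 / 8 * (Λ ^ 2 / c) * (Λ / N) ^ 2 *
      ∫ y in 0..Λ, deriv (fun x => deriv (fun τ => ℓ x τ) s) y ^ 2 :=
    (intervalIntegral.continuous_parametric_intervalIntegral_of_continuous'
      ((hℓ.continuous_deriv_space_time.comp continuous_swap).pow 2) 0 Λ).const_mul _
  have integrated := intervalIntegral.sub_le_integral_of_hasDeriv_right_of_le ht energy_cont
    energy_deriv growth_cont.continuousOn.integrableOn_Icc fun s hs => by
      linarith [hℓ.sum_springForce_sub_heatResidual_mul_le hx hΛ hc hα hN hs.1]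
  rw [intervalIntegral.integral_const_mul] at integrated
  linarith

lemma integral_sq_error_le (hΛ : 0 < Λ) (hc : 0 < c) (hα : 0 ≤ α) (hN : 0 < N) {v₀ v : ℝ → ℝ}
    {t : ℝ} (ht : 0 ≤ t) (hv₀ : IsVh Λ N v₀) (hv₀x : ∀ j < N, v₀ (j * (Λ / N)) = x j 0)
    (hv : IsVh Λ N v) (hvx : ∀ j < N, v (j * (Λ / N)) = x j t) :
    ∫ y in 0..Λ, (v y - ℓ y t) ^ 2 ≤
      24 * (∫ y in 0..Λ, (v₀ y - ℓ y 0) ^ 2) +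
      24 * (Λ / N) ^ 4 * (∫ y in 0..Λ, deriv (fun x => deriv (fun x' => ℓ x' 0) x) y ^ 2) +
      2 * (Λ / N) ^ 4 * (∫ y in 0..Λ, deriv (fun x => deriv (fun x' => ℓ x' t) x) y ^ 2) +
      9 / 4 * (Λ ^ 2 / c) * (Λ / N) ^ 2 *
        ∫ s in 0..t, ∫ y in 0..Λ, deriv (fun x => deriv (fun τ => ℓ x τ) s) y ^ 2 := by
  have final := hv.integral_sq_sub_le hΛ (fun y _ => (hℓ.hasDerivAt_space y t).hasDerivWithinAt)
    (fun y _ => (hℓ.hasDerivAt_deriv_space y t).hasDerivWithinAt)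
    (hℓ.continuous_deriv_space_space t).continuousOn hN (hℓ.dirichlet_Ici ht)
  have initial := hv₀.nodalEnergy_sub_le hΛ (fun y _ => (hℓ.hasDerivAt_space y 0).hasDerivWithinAt)
    (fun y _ => (hℓ.hasDerivAt_deriv_space y 0).hasDerivWithinAt)
    (hℓ.continuous_deriv_space_space 0).continuousOn hN
  have evolution := hℓ.nodalEnergy_le_add_integral hx hΛ hc hα hN ht
  rw [nodalEnergy_congr fun j hj => by rw [hvx j hj]] at final
  rw [nodalEnergy_congr fun j hj => by rw [hv₀x j hj]] at initial
  linarith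

end IsHeatRobinSolution

end Evolution

theorem discrete_to_continuous_L2_convergence_general {Λ c α : ℝ} (hΛ : 0 < Λ) (hc : 0 < c)
    (hα : 0 ≤ α) {F : ℝ → ℝ} {ℓ : ℝ → ℝ → ℝ} (hℓ : IsHeatRobinSolution Λ c α F ℓ) {N : ℕ}
    (hN : 0 < N) {x : ℕ → ℝ → ℝ} (hx : IsSpringSolution Λ c α F N x) {v₀ v : ℝ → ℝ} {t : ℝ}
    (ht : 0 ≤ t) (hv₀ : IsVh Λ N v₀) (hv₀x : ∀ j < N, v₀ (j * (Λ / N)) = x j 0)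
    (hv : IsVh Λ N v) (hvx : ∀ j < N, v (j * (Λ / N)) = x j t) :
    √(∫ y in 0..Λ, (v y - ℓ y t) ^ 2) ≤
      (5 + Λ ^ 2 / c) * √(∫ y in 0..Λ, (v₀ y - ℓ y 0) ^ 2) +
      (5 + Λ ^ 2 / c) * (Λ / N) ^ 2 *
        (√(∫ y in 0..Λ, deriv (fun x => deriv (fun x' => ℓ x' 0) x) y ^ 2) +
          √(∫ y in 0..Λ, deriv (fun x => deriv (fun x' => ℓ x' t) x) y ^ 2)) +
      (5 + Λ ^ 2 / c) * (Λ / N) *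
        √(∫ s in 0..t, ∫ y in 0..Λ, deriv (fun x => deriv (fun τ => ℓ x τ) s) y ^ 2) := by
  have nonneg (g : ℝ → ℝ) : 0 ≤ ∫ y in 0..Λ, g y ^ 2 :=
    intervalIntegral.integral_nonneg hΛ.le fun _ _ => sq_nonneg _
  have hk : 0 < Λ ^ 2 / c := by positivity
  exact sqrt_le_of_le_weighted_sum (nonneg _) (nonneg _) (nonneg _)
    (intervalIntegral.integral_nonneg ht fun _ _ => nonneg _) (by positivity) (by positivity)
    (by nlinarith) (by nlinarith) (by nlinarith) (by nlinarith)
    (hℓ.integral_sq_error_le hx hΛ hc hα hN ht hv₀ hv₀x hv hvx)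

/-- Theorem 1 (first-order `L²` convergence of the discrete swimmer to the
continuous one). Let `ℓ = ℓ(y,t)` be a smooth solution of the continuous
swimmer problem (heat equation with Fourier-type boundary condition at `0` and
Dirichlet condition at `Λ`, forced by `L̇₀`), with initial data `ℓ₀ = ℓ(·,0)`.
Then there is `C > 0`, independent of `h = Λ/N`, such that for every `N`, every
solution `ℓd` of the `N`-spring ODE system with initial values
`ℓd_j(0) = ℓ_{0,h}(y_j)` for some `ℓ_{0,h} ∈ V_h`, and the piecewise affine
interpolant `ℓh(·,t) ∈ V_h` with `ℓh(y_j,t) = ℓd_j(t)`, one has for all `t ≥ 0`: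
`‖ℓh(·,t) − ℓ(·,t)‖ ≤ C‖ℓ_{0,h} − ℓ₀‖ + Ch²(‖∂_{yy}ℓ₀‖ + ‖∂_{yy}ℓ(·,t)‖)
  + Ch(∫₀^t ‖∂_{yt}ℓ(·,s)‖² ds)^{1/2}`. -/
theorem discrete_to_continuous_L2_convergence (Λ K a a1 : ℝ)
    (hΛ : 0 < Λ) (hK : 0 < K) (ha : 0 < a) (ha1 : 0 < a1)
    (L0 : ℝ → ℝ) (hL0 : ContDiff ℝ (⊤ : ℕ∞) L0)
    (ℓ : ℝ → ℝ → ℝ)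
    (hreg : ContDiff ℝ (⊤ : ℕ∞) (fun p : ℝ × ℝ => ℓ p.1 p.2))
    (hpde : ∀ y ∈ Set.Ioo (0 : ℝ) Λ, ∀ t > (0 : ℝ),
      deriv (fun s => ℓ y s) t =
        Λ ^ 2 * K * deriv (fun x => deriv (fun x' => ℓ x' t) x) y)
    (hbc0 : ∀ t > (0 : ℝ),
      Λ ^ 2 * K * deriv (fun x => ℓ x t) 0 - Λ * K * (a / (2 * a1)) * ℓ 0 t =
        (Λ / 2) * deriv L0 t)
    (hbcΛ : ∀ t > (0 : ℝ), ℓ Λ t = 0) :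
    ∃ C > 0, ∀ N : ℕ, 0 < N →
      ∀ (ℓd : ℕ → ℝ → ℝ) (ℓ0h : ℝ → ℝ) (ℓh : ℝ → ℝ → ℝ),
      (∀ j : ℕ, 1 ≤ j → j ≤ N → Differentiable ℝ (ℓd j)) →
      (∀ j : ℕ, 2 ≤ j → j ≤ N → ∀ t : ℝ,
        deriv (ℓd j) t =
          Λ ^ 2 * K * (ℓd (j - 1) t - 2 * ℓd j t + ℓd (j + 1) t) / (Λ / N) ^ 2) →
      (∀ t : ℝ, (Λ / N) * deriv (ℓd 1) t =
        Λ ^ 2 * K * (ℓd 2 t - ℓd 1 t) / (Λ / N) - (Λ * K * a / (2 * a1)) * ℓd 1 t -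
          (Λ / 2) * deriv L0 t) →
      (∀ t : ℝ, ℓd (N + 1) t = 0) →
      IsVh Λ N ℓ0h →
      (∀ j : ℕ, 1 ≤ j → j ≤ N + 1 → ℓd j 0 = ℓ0h (((j : ℝ) - 1) * (Λ / N))) →
      (∀ t : ℝ, IsVh Λ N (fun y => ℓh y t)) →
      (∀ j : ℕ, 1 ≤ j → j ≤ N + 1 → ∀ t : ℝ,
        ℓh (((j : ℝ) - 1) * (Λ / N)) t = ℓd j t) →
      ∀ t ≥ (0 : ℝ),
        Real.sqrt (∫ y in (0:ℝ)..Λ, (ℓh y t - ℓ y t) ^ 2) ≤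
          C * Real.sqrt (∫ y in (0:ℝ)..Λ, (ℓ0h y - ℓ y 0) ^ 2) +
          C * (Λ / N) ^ 2 *
            (Real.sqrt (∫ y in (0:ℝ)..Λ,
                (deriv (fun x => deriv (fun x' => ℓ x' 0) x) y) ^ 2) +
              Real.sqrt (∫ y in (0:ℝ)..Λ,
                (deriv (fun x => deriv (fun x' => ℓ x' t) x) y) ^ 2)) +
          C * (Λ / N) *
            Real.sqrt (∫ s in (0:ℝ)..t, ∫ y in (0:ℝ)..Λ,
              (deriv (fun x => deriv (fun τ => ℓ x τ) s) y) ^ 2) := by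
  have hℓ : IsHeatRobinSolution Λ (Λ ^ 2 * K) (Λ * K * a / (2 * a1))
      (fun t => Λ / 2 * deriv L0 t) ℓ :=
    { contDiff := contDiff_infty.1 hreg 2
      heat := hpde
      robin := by simpa only [mul_div_assoc] using hbc0
      dirichlet := hbcΛ }
  refine ⟨5 + Λ ^ 2 / (Λ ^ 2 * K), by positivity, ?_⟩
  intro N hN ℓd ℓ0h ℓh hdiff hode hode₁ hend hℓ0h hinit hℓh hnodes t ht
  refine discrete_to_continuous_L2_convergence_general hΛ (by positivity) (by positivity) hℓ hN
    (.of_deriv hN hΛ hdiff hode hode₁ hend) ht hℓ0h (fun j hj => ?_) (hℓh t) fun j hj => ?_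
  · simpa using (hinit (j + 1) (by omega) (by omega)).symm
  · simpa using hnodes (j + 1) (by omega) (by omega) t
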